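/- For all sufficiently large n, the numbers 3n−4 and 4n−4 do not belong to L_n, the set of region counts of n distinct lines in the plane. -/

import Mathlib

noncomputable section

/-- The number of connected components of the complement of `S`. -/
def regionCount {X : Type*} [TopologicalSpace X] (S : Set X) : ℕ :=
  Nat.card (ConnectedComponents ↥(Sᶜ))

/-- A line in the plane `ℝ²`. -/
def IsLine (L : Set (ℝ × ℝ)) : Prop :=
  ∃ a b c : ℝ, (a, b) ≠ (0, 0) ∧ L = {p : ℝ × ℝ | a * p.1 + b * p.2 = c}

/-- A circle in the plane `ℝ²`. -/
def IsCircle (S : Set (ℝ × ℝ)) : Prop :=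
  ∃ (o : ℝ × ℝ) (r : ℝ), 0 < r ∧
    S = {p : ℝ × ℝ | (p.1 - o.1) ^ 2 + (p.2 - o.2) ^ 2 = r ^ 2}

/-- An arrangement of lines is in general position if every two lines meet
(no two parallel) and no three are concurrent. -/
def LinesGenPos {n : ℕ} (ℓ : Fin n → Set (ℝ × ℝ)) : Prop :=
  (∀ i j, i ≠ j → (ℓ i ∩ ℓ j).Nonempty) ∧
    (∀ i j k, i ≠ j → j ≠ k → i ≠ k → ℓ i ∩ ℓ j ∩ ℓ k = ∅)

/-- An arrangement of circles is in general position if every two circles cross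
in exactly two points and no three circles are concurrent. -/
def CirclesGenPos {n : ℕ} (c : Fin n → Set (ℝ × ℝ)) : Prop :=
  (∀ i j, i ≠ j → Nat.card ↥(c i ∩ c j) = 2) ∧
    (∀ i j k, i ≠ j → j ≠ k → i ≠ k → c i ∩ c j ∩ c k = ∅)

/-- `Lset n`: possible numbers of regions of `n` distinct lines in the plane. -/
def Lset (n : ℕ) : Set ℕ :=
  {f | ∃ ℓ : Fin n → Set (ℝ × ℝ), (∀ i, IsLine (ℓ i)) ∧ Function.Injective ℓ ∧
    f = regionCount (⋃ i, ℓ i)}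

/-- `Cset n`: possible numbers of regions of `n` distinct circles in the plane,
not in general position, every two of which share at least one point. -/
def Cset (n : ℕ) : Set ℕ :=
  {f | ∃ c : Fin n → Set (ℝ × ℝ), (∀ i, IsCircle (c i)) ∧ Function.Injective c ∧
    (∀ i j, i ≠ j → (c i ∩ c j).Nonempty) ∧ ¬ CirclesGenPos c ∧
    f = regionCount (⋃ i, c i)}

/-- Inversion of the plane with center `O` and radius `r`. -/
def inversion (O : ℝ × ℝ) (r : ℝ) (P : ℝ × ℝ) : ℝ × ℝ :=
  (O.1 + r ^ 2 * (P.1 - O.1) / ((P.1 - O.1) ^ 2 + (P.2 - O.2) ^ 2),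
   O.2 + r ^ 2 * (P.2 - O.2) / ((P.1 - O.1) ^ 2 + (P.2 - O.2) ^ 2))

section Arr

variable {ι : Type} [Fintype ι] [DecidableEq ι] {E : Type} [AddCommGroup E] [Module ℝ E]

def sg (g : ι → E →ᵃ[ℝ] ℝ) (S : Finset ι) (p : E) : Set ι := {i | i ∈ S ∧ 0 < g i p}

def rg (g : ι → E →ᵃ[ℝ] ℝ) (S : Finset ι) : Set E := {p | ∀ i ∈ S, g i p ≠ 0}

def cnt (g : ι → E →ᵃ[ℝ] ℝ) (S : Finset ι) : ℕ := (sg g S '' rg g S).ncard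

lemma sg_eq_iff {g : ι → E →ᵃ[ℝ] ℝ} {S : Finset ι} {p q : E} :
    sg g S p = sg g S q ↔ ∀ i ∈ S, (0 < g i p ↔ 0 < g i q) := by
  simp only [sg, Set.ext_iff, Set.mem_setOf_eq]
  constructor
  · intro h i hi; have := h i; tauto
  · intro h i; have := h i; tauto

lemma aff_add (f : E →ᵃ[ℝ] ℝ) (p v : E) (t : ℝ) : f (p + t • v) = f p + t * f.linear v := by
  have := f.map_vadd p (t • v)
  simp only [vadd_eq_add, map_smul, smul_eq_mul] at this
  rw [add_comm p, this]; ring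

lemma move (g : ι → E →ᵃ[ℝ] ℝ) (S : Finset ι) (p v : E) (hp : p ∈ rg g S) :
    ∃ e > 0, ∀ t : ℝ, |t| < e → p + t • v ∈ rg g S ∧ sg g S (p + t • v) = sg g S p := by
  have key : ∀ᶠ t : ℝ in nhds 0, ∀ i ∈ S, g i (p + t • v) ≠ 0 ∧
      (0 < g i (p + t • v) ↔ 0 < g i p) := by
    rw [Filter.eventually_all_finset]
    intro i hi
    have hc : Continuous fun t : ℝ => g i (p + t • v) := by
      simp only [aff_add]; fun_prop
    have h0 : g i (p + (0:ℝ) • v) = g i p := by simp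
    rcases lt_or_gt_of_ne (hp i hi) with h | h
    · have : ∀ᶠ t : ℝ in nhds 0, g i (p + t • v) < 0 :=
        hc.continuousAt.eventually_lt_const (by simpa [h0] using h)
      filter_upwards [this] with t ht
      exact ⟨ht.ne, by constructor <;> intro <;> linarith⟩
    · have : ∀ᶠ t : ℝ in nhds 0, 0 < g i (p + t • v) :=
        hc.continuousAt.eventually_const_lt (by simpa [h0] using h)
      filter_upwards [this] with t ht
      exact ⟨ht.ne', by constructor <;> intro <;> linarith⟩
  obtain ⟨e, he, h⟩ := Metric.eventually_nhds_iff.1 key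
  refine ⟨e, he, fun t ht => ?_⟩
  have := h (y := t) (by simpa [Real.dist_eq] using ht)
  exact ⟨fun i hi => (this i hi).1, sg_eq_iff.2 fun i hi => (this i hi).2⟩

lemma seg_pos (f : E →ᵃ[ℝ] ℝ) (p q : E) (t : ℝ) :
    f (p + t • (q - p)) = (1 - t) * f p + t * f q := by
  have h := aff_add f p (q - p) 1
  have h2 := aff_add f p (q - p) t
  simp at h
  rw [h2]; rw [map_sub]; linear_combination (-t) * h

lemma seg_same {g : ι → E →ᵃ[ℝ] ℝ} {S : Finset ι} {p q : E} (hp : p ∈ rg g S) (hq : q ∈ rg g S)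
    (h : sg g S p = sg g S q) {t : ℝ} (h0 : 0 ≤ t) (h1 : t ≤ 1) :
    p + t • (q - p) ∈ rg g S ∧ sg g S (p + t • (q - p)) = sg g S p := by
  rw [sg_eq_iff] at *
  have key : ∀ i ∈ S, g i (p + t • (q - p)) ≠ 0 ∧ (0 < g i (p + t • (q - p)) ↔ 0 < g i p) := by
    intro i hi
    rw [seg_pos]
    have h3 := h i hi
    rcases lt_or_gt_of_ne (hp i hi) with h4 | h4
    · have h5 : g i q < 0 := lt_of_le_of_ne (by
        by_contra hh; push Not at hh; exact absurd (h3.2 hh) (by linarith)) (hq i hi)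
      have : (1 - t) * g i p + t * g i q < 0 := by
        rcases h0.eq_or_lt with h6 | h6
        · subst h6; simpa using h4
        · nlinarith
      exact ⟨this.ne, by constructor <;> intro <;> linarith⟩
    · have h5 := h3.1 h4
      have : 0 < (1 - t) * g i p + t * g i q := by
        rcases h0.eq_or_lt with h6 | h6
        · subst h6; simpa using h4
        · nlinarith
      exact ⟨this.ne', by constructor <;> intro <;> linarith⟩
  exact ⟨fun i hi => (key i hi).1, fun i hi => (key i hi).2⟩

lemma cnt_insert (g : ι → E →ᵃ[ℝ] ℝ) (S : Finset ι) (j : ι) (hj : j ∉ S) (v : E)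
    (hv : (g j).linear v ≠ 0) :
    cnt g (insert j S) = cnt g S + (sg g S '' {p | p ∈ rg g S ∧ g j p = 0}).ncard := by
  set P := sg g S '' {p | p ∈ rg g S ∧ 0 < g j p} with hP
  set M := sg g S '' {p | p ∈ rg g S ∧ g j p < 0} with hM
  set Q := sg g S '' {p | p ∈ rg g S ∧ g j p = 0} with hQ
  wlog hv' : 0 < (g j).linear v generalizing v
  · exact this (-v) (by simpa using hv) (by
      rw [map_neg]; have := lt_of_le_of_ne (not_lt.1 hv') hv; linarith)
  have hjT : ∀ p, j ∉ sg g S p := fun p h => hj h.1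
  have QP : Q ⊆ P := by
    rintro _ ⟨p, ⟨hp, hp0⟩, rfl⟩
    obtain ⟨e, he, h⟩ := move g S p v hp
    have h1 := h (e / 2) (by rw [abs_of_pos] <;> linarith)
    refine ⟨_, ⟨h1.1, ?_⟩, h1.2⟩
    rw [aff_add, hp0]; positivity
  have QM : Q ⊆ M := by
    rintro _ ⟨p, ⟨hp, hp0⟩, rfl⟩
    obtain ⟨e, he, h⟩ := move g S p v hp
    have h1 := h (-(e / 2)) (by rw [abs_neg, abs_of_pos] <;> linarith)
    refine ⟨_, ⟨h1.1, ?_⟩, h1.2⟩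
    rw [aff_add, hp0]; nlinarith [mul_pos he hv']
  have hU : sg g S '' rg g S = P ∪ M := by
    apply Set.Subset.antisymm
    · rintro _ ⟨p, hp, rfl⟩
      rcases lt_trichotomy (g j p) 0 with h | h | h
      · exact Or.inr ⟨p, ⟨hp, h⟩, rfl⟩
      · exact Or.inl (QP ⟨p, ⟨hp, h⟩, rfl⟩)
      · exact Or.inl ⟨p, ⟨hp, h⟩, rfl⟩
    · rintro _ (⟨p, ⟨hp, h⟩, rfl⟩ | ⟨p, ⟨hp, h⟩, rfl⟩) <;> exact ⟨p, hp, rfl⟩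
  have hI : P ∩ M = Q := by
    apply Set.Subset.antisymm
    · rintro _ ⟨⟨p, ⟨hp, h⟩, rfl⟩, ⟨q, ⟨hq, h'⟩, hpq⟩⟩
      have hd : 0 < g j p - g j q := by linarith
      have := seg_same hp hq hpq.symm (t := g j p / (g j p - g j q)) (by positivity)
        (by rw [div_le_one hd]; linarith)
      refine ⟨_, ⟨this.1, ?_⟩, this.2⟩
      rw [seg_pos]; field_simp; ring
    · exact Set.subset_inter QP QM
  have hR : sg g (insert j S) '' rg g (insert j S) = (fun T => insert j T) '' P ∪ M := by
    have e1 : ∀ p, 0 < g j p → sg g (insert j S) p = insert j (sg g S p) := by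
      intro p hp; ext i; simp only [sg, Finset.mem_insert, Set.mem_setOf_eq, Set.mem_insert_iff]
      constructor
      · tauto
      · rintro (rfl | h)
        · exact ⟨Or.inl rfl, hp⟩
        · tauto
    have e2 : ∀ p, g j p < 0 → sg g (insert j S) p = sg g S p := by
      intro p hp; ext i; simp only [sg, Finset.mem_insert, Set.mem_setOf_eq]
      constructor
      · rintro ⟨rfl | h, h'⟩
        · linarith
        · tauto
      · tauto
    apply Set.Subset.antisymm
    · rintro _ ⟨p, hp, rfl⟩
      have hp' : p ∈ rg g S := fun i hi => hp i (Finset.mem_insert_of_mem hi)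
      rcases lt_or_gt_of_ne (hp j (Finset.mem_insert_self _ _)) with h | h
      · exact Or.inr ⟨p, ⟨hp', h⟩, (e2 p h).symm⟩
      · exact Or.inl ⟨_, ⟨p, ⟨hp', h⟩, rfl⟩, (e1 p h).symm⟩
    · rintro _ (⟨_, ⟨p, ⟨hp, h⟩, rfl⟩, rfl⟩ | ⟨p, ⟨hp, h⟩, rfl⟩)
      · refine ⟨p, ?_, e1 p h⟩
        intro i hi
        rcases Finset.mem_insert.1 hi with rfl | hi
        · exact h.ne'
        · exact hp i hi
      · refine ⟨p, ?_, e2 p h⟩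
        intro i hi
        rcases Finset.mem_insert.1 hi with rfl | hi
        · exact h.ne
        · exact hp i hi
  unfold cnt
  rw [hR, hU, Set.ncard_union_eq ?_ (Set.toFinite _) (Set.toFinite _), Set.ncard_image_of_injOn,
    ← Set.ncard_union_add_ncard_inter P M (Set.toFinite _) (Set.toFinite _), hI]
  · rintro _ ⟨p, _, rfl⟩ _ ⟨q, _, rfl⟩ h
    have h : insert j (sg g S p) = insert j (sg g S q) := h
    ext i
    by_cases hij : i = j
    · subst hij; simp [hjT]
    · have := Set.ext_iff.1 h i; simpa [hij] using this
  · rw [Set.disjoint_left]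
    rintro _ ⟨_, _, rfl⟩ ⟨q, _, h⟩
    exact hjT q (h ▸ Set.mem_insert _ _)

lemma cnt_insert_const (g : ι → E →ᵃ[ℝ] ℝ) (S : Finset ι) (j : ι) (hj : j ∉ S)
    (h0 : ∀ v, (g j).linear v = 0) (p0 : E) (hp0 : g j p0 ≠ 0) :
    cnt g (insert j S) = cnt g S := by
  have hc : ∀ p, g j p = g j p0 := by
    intro p
    have := aff_add (g j) p0 (p - p0) 1
    simpa [h0] using this
  have hr : rg g (insert j S) = rg g S := by
    ext p
    simp only [rg, Set.mem_setOf_eq, Finset.mem_insert, forall_eq_or_imp, hc p]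
    tauto
  have hs : sg g (insert j S) '' rg g S =
      (fun T : Set ι => T ∪ {i | i = j ∧ 0 < g j p0}) '' (sg g S '' rg g S) := by
    rw [Set.image_image]
    apply Set.image_congr
    intro p hp
    ext i
    simp only [sg, Finset.mem_insert, Set.mem_setOf_eq, Set.mem_union]
    constructor
    · rintro ⟨rfl | h, h'⟩
      · right; exact ⟨rfl, hc p ▸ h'⟩
      · tauto
    · rintro (h | ⟨rfl, h⟩)
      · tauto
      · exact ⟨Or.inl rfl, (hc p).symm ▸ h⟩
  unfold cnt
  rw [hr, hs, Set.ncard_image_of_injOn]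
  rintro _ ⟨p, _, rfl⟩ _ ⟨q, _, rfl⟩ h
  ext i
  by_cases hij : i = j
  · subst hij; simp [sg, hj]
  · have := Set.ext_iff.1 h i; simpa [hij] using this

lemma cnt_empty (g : ι → E →ᵃ[ℝ] ℝ) : cnt g ∅ = 1 := by
  have : sg g ∅ '' rg g ∅ = {∅} := by
    apply Set.eq_singleton_iff_unique_mem.2
    refine ⟨⟨0, by simp [rg], by simp [sg]⟩, ?_⟩
    rintro _ ⟨p, _, rfl⟩; simp [sg]
  rw [cnt, this, Set.ncard_singleton]

lemma root_unique (f : ℝ →ᵃ[ℝ] ℝ) (hf : ∃ t, f t ≠ 0) {s t : ℝ} (hs : f s = 0) (ht : f t = 0) :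
    s = t := by
  by_contra hne
  obtain ⟨u, hu⟩ := hf
  apply hu
  have h1 := aff_add f s (t - s) ((u - s) / (t - s))
  have h2 := aff_add f s (t - s) 1
  have : t - s ≠ 0 := sub_ne_zero.2 (Ne.symm hne)
  simp only [smul_eq_mul, div_mul_cancel₀ _ this, add_sub_cancel, one_mul, hs, ht, zero_add] at h1 h2
  rw [h1, ← h2, mul_zero]

lemma roots_finite (g : ι → ℝ →ᵃ[ℝ] ℝ) (S : Finset ι) (hg : ∀ i ∈ S, ∃ t, g i t ≠ 0) :
    {t | ∃ i ∈ S, g i t = 0}.Finite := by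
  have : {t | ∃ i ∈ S, g i t = 0} = ⋃ i ∈ S, {t | g i t = 0} := by ext; simp
  rw [this]
  refine Set.Finite.biUnion S.finite_toSet fun i hi => ?_
  exact Set.Subsingleton.finite fun s hs t ht => root_unique (g i) (hg i hi) hs ht

lemma cnt_one (g : ι → ℝ →ᵃ[ℝ] ℝ) (S : Finset ι) (hg : ∀ i ∈ S, ∃ t, g i t ≠ 0) :
    cnt g S = {t | ∃ i ∈ S, g i t = 0}.ncard + 1 := by
  induction S using Finset.induction_on with
  | empty => simp [cnt_empty]
  | insert j S hj ih =>
    have hgS : ∀ i ∈ S, ∃ t, g i t ≠ 0 := fun i hi => hg i (Finset.mem_insert_of_mem hi)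
    have hgj := hg j (Finset.mem_insert_self _ _)
    have ih := ih hgS
    have hfin := roots_finite g S hgS
    by_cases hlin : ∃ v, (g j).linear v ≠ 0
    · obtain ⟨v, hv⟩ := hlin
      rw [cnt_insert g S j hj v hv, ih]
      obtain ⟨r, hr⟩ : ∃ r, g j r = 0 := by
        refine ⟨0 + (-(g j 0) / (g j).linear v) • v, ?_⟩
        rw [aff_add]; field_simp; ring
      have hset : {t | ∃ i ∈ insert j S, g i t = 0} = insert r {t | ∃ i ∈ S, g i t = 0} := by
        ext t
        simp only [Finset.mem_insert, exists_eq_or_imp, Set.mem_setOf_eq, Set.mem_insert_iff]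
        refine or_congr ⟨fun h => root_unique _ hgj h hr, fun h => h ▸ hr⟩ Iff.rfl
      rw [hset]
      by_cases hrS : r ∈ {t | ∃ i ∈ S, g i t = 0}
      · have : {p | p ∈ rg g S ∧ g j p = 0} = ∅ := by
          ext t
          simp only [Set.mem_setOf_eq, Set.mem_empty_iff_false, iff_false, not_and]
          intro ht h0
          have := root_unique _ hgj h0 hr
          subst this
          obtain ⟨i, hi, h⟩ := hrS
          exact ht i hi h
        rw [this, Set.insert_eq_of_mem hrS]; simp
      · have : {p | p ∈ rg g S ∧ g j p = 0} = {r} := by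
          ext t
          simp only [Set.mem_setOf_eq, Set.mem_singleton_iff]
          constructor
          · rintro ⟨_, h⟩; exact root_unique _ hgj h hr
          · rintro rfl
            exact ⟨fun i hi h => hrS ⟨i, hi, h⟩, hr⟩
        rw [this, Set.image_singleton, Set.ncard_singleton, Set.ncard_insert_of_notMem hrS hfin]
    · push Not at hlin
      obtain ⟨p0, hp0⟩ := hgj
      rw [cnt_insert_const g S j hj hlin p0 hp0, ih]
      congr 2
      ext t
      simp only [Finset.mem_insert, exists_eq_or_imp, Set.mem_setOf_eq]
      have : g j t ≠ 0 := by
        have := aff_add (g j) p0 (t - p0) 1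
        simp [hlin] at this
        rwa [this]
      tauto

end Arr

section Arith

lemma arithU {f f' F N t u : ℕ} (h1 : N ≤ t + u) (h2 : f' = f + N + 1)
    (h3 : 2 * f ≤ 2 * F + 2 * u * (t + 1) + u * (u - 1)) :
    2 * f' ≤ 2 * F + 2 * (u + 1) * (t + 1) + (u + 1) * (u + 1 - 1) := by
  rcases Nat.eq_zero_or_pos u with h | h
  · subst h; omega
  · obtain ⟨v, rfl⟩ := Nat.exists_eq_add_of_le' h
    simp only [Nat.add_sub_cancel] at *
    nlinarith

lemma arithC {f N s a b : ℕ} (h1 : a ≤ 4) (h2 : b ≤ N * 4) (h3 : s ≤ a + b)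
    (h : 8 + s * (s - 1) ≤ 8 * f) : 8 + (s + 1) * (s + 1 - 1) ≤ 8 * (f + N + 1) := by
  rcases Nat.eq_zero_or_pos s with h' | h'
  · subst h'; omega
  · obtain ⟨v, rfl⟩ := Nat.exists_eq_add_of_le' h'
    simp only [Nat.add_sub_cancel] at *
    nlinarith

lemma arithA {f s k : ℕ} (hn : 100 ≤ s + k) (hs : 6 ≤ s) (hL : s + 1 + (s + 1) * k ≤ f)
    (hU : 2 * f ≤ 2 * (s + 1) + 2 * k * (s + 1) + k * (k - 1)) :
    f ≠ 3 * (s + k) - 4 ∧ f ≠ 4 * (s + k) - 4 := by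
  by_cases hk : k ≤ 4
  · interval_cases k <;> omega
  · have : 4 * (s + k) < s + 1 + (s + 1) * k + 4 := by
      obtain ⟨u, rfl⟩ := Nat.exists_eq_add_of_le (show 5 ≤ k by omega)
      obtain ⟨v, rfl⟩ := Nat.exists_eq_add_of_le hs
      ring_nf
      have := Nat.zero_le (u * v)
      omega
    omega

lemma arithB {f s k : ℕ} (hn : 100 ≤ s + k) (hs : 6 ≤ s) (hL : 2 * s + s * k ≤ f)
    (hU : 2 * f ≤ 2 * (2 * s) + 2 * k * (s + 1) + k * (k - 1)) :
    f ≠ 3 * (s + k) - 4 ∧ f ≠ 4 * (s + k) - 4 := by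
  by_cases hk : k ≤ 4
  · interval_cases k <;> omega
  · have : 4 * (s + k) < 2 * s + s * k + 4 := by
      obtain ⟨u, rfl⟩ := Nat.exists_eq_add_of_le (show 5 ≤ k by omega)
      obtain ⟨v, rfl⟩ := Nat.exists_eq_add_of_le hs
      ring_nf
      have := Nat.zero_le (u * v)
      omega
    omega

end Arith

section Comb

set_option maxHeartbeats 1000000 in
open Classical in
lemma comb {ι P : Type} [Fintype ι] (Z : ι → Set P) (Par : ι → ι → Prop)
    (F : Finset ι → ℕ) (hF0 : F ∅ = 1)
    (hF : ∀ j S, j ∉ S → F (insert j S) = F S + {p | p ∈ Z j ∧ ∃ i ∈ S, p ∈ Z i}.ncard + 1)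
    (H1 : ∀ i j, i ≠ j → ∀ p q, p ∈ Z i → p ∈ Z j → q ∈ Z i → q ∈ Z j → p = q)
    (hrefl : ∀ i, Par i i)
    (hsymm : ∀ i j, Par i j → Par j i) (htrans : ∀ i j k, Par i j → Par j k → Par i k)
    (hpar : ∀ i j, i ≠ j → Par i j → ∀ p, p ∈ Z i → p ∈ Z j → False)
    (hnpar : ∀ i j, ¬ Par i j → ∃ p, p ∈ Z i ∧ p ∈ Z j)
    (n : ℕ) (hn : Fintype.card ι = n) (hn100 : 100 ≤ n) :
    F Finset.univ ≠ 3 * n - 4 ∧ F Finset.univ ≠ 4 * n - 4 := by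
  set N : ι → Finset ι → Set P := fun j S => {p | p ∈ Z j ∧ ∃ i ∈ S, p ∈ Z i} with hN
  replace hF : ∀ j S, j ∉ S → F (insert j S) = F S + (N j S).ncard + 1 := hF
  have hch : ∀ j S, ∃ f : P → ι, ∀ p ∈ N j S, f p ∈ S ∧ p ∈ Z (f p) := by
    intro j S
    refine ⟨fun p => if h : ∃ i ∈ S, p ∈ Z i then h.choose else j, ?_⟩
    rintro p ⟨_, h⟩
    simp only [dif_pos h]
    exact h.choose_spec
  have hinj : ∀ j S (f : P → ι), j ∉ S → (∀ p ∈ N j S, f p ∈ S ∧ p ∈ Z (f p)) →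
      Set.InjOn f (N j S) := by
    intro j S f hj hf p hp q hq hpq
    refine H1 j (f p) ?_ p q hp.1 (hf p hp).2 hq.1 (hpq ▸ (hf q hq).2)
    intro h; exact hj (h ▸ (hf p hp).1)
  have hfin : ∀ j S, j ∉ S → (N j S).Finite := by
    intro j S hj
    obtain ⟨f, hf⟩ := hch j S
    exact Set.Finite.of_finite_image (Set.toFinite (f '' N j S)) (hinj j S f hj hf)
  have hup : ∀ j S, j ∉ S → (N j S).ncard ≤ S.card := by
    intro j S hj
    obtain ⟨f, hf⟩ := hch j S
    rw [← Set.ncard_coe_finset S]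
    exact Set.ncard_le_ncard_of_injOn f (fun p hp => (hf p hp).1) (hinj j S f hj hf) (Set.toFinite _)
  have hlow : ∀ j S T, j ∉ S → T ⊆ S → (∀ i ∈ T, ¬ Par i j) →
      (∀ i ∈ T, ∀ k ∈ T, i ≠ k → ∀ q, q ∈ Z i → q ∈ Z k → q ∈ Z j → False) →
      T.card ≤ (N j S).ncard := by
    intro j S T hj hTS hT hd
    by_cases hem : T = ∅
    · simp [hem]
    have : ∃ f : ι → P, ∀ i ∈ T, f i ∈ Z i ∧ f i ∈ Z j := by
      by_cases hne : T.Nonempty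
      · obtain ⟨i0, hi0⟩ := hne
        obtain ⟨p0, _⟩ := hnpar i0 j (hT i0 hi0)
        refine ⟨fun i => if h : ∃ p, p ∈ Z i ∧ p ∈ Z j then h.choose else p0, ?_⟩
        intro i hi
        have h := hnpar i j (hT i hi)
        simp only [dif_pos h]
        exact h.choose_spec
      · rw [Finset.not_nonempty_iff_eq_empty] at hne
        exact absurd hne hem
    obtain ⟨f, hf⟩ := this
    rw [← Set.ncard_coe_finset T]
    refine Set.ncard_le_ncard_of_injOn f (fun i hi => ⟨(hf i hi).2, i, hTS hi, (hf i hi).1⟩) ?_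
      (hfin j S hj)
    intro i hi k hk hik
    by_contra hne
    exact hd i hi k hk hne (f i) (hf i hi).1 (hik ▸ (hf k hk).1) (hf i hi).2
  -- increments from T upwards
  have hincL : ∀ (T : Finset ι) (w : ℕ), (∀ j S, T ⊆ S → j ∉ S → w ≤ (N j S).ncard + 1) →
      ∀ U : Finset ι, Disjoint T U → F T + w * U.card ≤ F (T ∪ U) := by
    intro T w hw U
    induction U using Finset.induction_on with
    | empty => simp
    | insert j U hj ih =>
      intro hd
      rw [Finset.disjoint_insert_right] at hd
      have hj' : j ∉ T ∪ U := by simp [hj, hd.1]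
      have h1 := hw j (T ∪ U) Finset.subset_union_left hj'
      have h2 := hF j (T ∪ U) hj'
      have h3 := ih hd.2
      rw [Finset.union_insert, Finset.card_insert_of_notMem hj]
      nlinarith
  have hincU : ∀ (T : Finset ι), ∀ U : Finset ι, Disjoint T U →
      2 * F (T ∪ U) ≤ 2 * F T + 2 * U.card * (T.card + 1) + U.card * (U.card - 1) := by
    intro T U
    induction U using Finset.induction_on with
    | empty => simp
    | insert j U hj ih =>
      intro hd
      rw [Finset.disjoint_insert_right] at hd
      have hj' : j ∉ T ∪ U := by simp [hj, hd.1]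
      have h1 := hup j (T ∪ U) hj'
      have h2 := hF j (T ∪ U) hj'
      have h3 := ih hd.2
      have h4 := Finset.card_union_of_disjoint hd.2
      rw [Finset.union_insert, Finset.card_insert_of_notMem hj]
      rw [h4] at h1
      exact arithU h1 h2 h3
  have hcompl : ∀ T : Finset ι, T ∪ Tᶜ = Finset.univ ∧ Disjoint T Tᶜ ∧ T.card + Tᶜ.card = n := by
    intro T
    exact ⟨Finset.union_compl T, disjoint_compl_right, by rw [Finset.card_add_card_compl, hn]⟩
  by_cases hA : ∃ j0, 6 ≤ (Finset.univ.filter (fun i => Par i j0)).card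
  · obtain ⟨j0, hs⟩ := hA
    set T := Finset.univ.filter (fun i => Par i j0) with hT
    have hTp : ∀ i ∈ T, ∀ k ∈ T, Par i k := by
      intro i hi k hk
      simp only [hT, Finset.mem_filter, Finset.mem_univ, true_and] at hi hk
      exact htrans _ _ _ hi (hsymm _ _ hk)
    have hFT : ∀ U : Finset ι, U ⊆ T → F U = U.card + 1 := by
      intro U
      induction U using Finset.induction_on with
      | empty => simp [hF0]
      | insert j U hj ih =>
        intro hU
        rw [Finset.insert_subset_iff] at hU
        have : N j U = ∅ := by
          apply Set.eq_empty_of_forall_notMem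
          rintro p ⟨hp, i, hi, hpi⟩
          exact hpar i j (fun h => hj (h ▸ hi)) (hTp i (hU.2 hi) j hU.1) p hpi hp
        rw [hF j U hj, ih hU.2, this, Finset.card_insert_of_notMem hj]; simp
    have hFT := hFT T subset_rfl
    obtain ⟨c1, c2, c3⟩ := hcompl T
    have hL := hincL T (T.card + 1) (by
      intro j S hTS hj
      have hjp : ∀ i ∈ T, ¬ Par i j := by
        intro i hi h
        apply hj; apply hTS
        simp only [hT, Finset.mem_filter, Finset.mem_univ, true_and] at hi ⊢
        exact htrans _ _ _ (hsymm _ _ h) hi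
      have := hlow j S T hj hTS hjp (by
        intro i hi k hk hik q h1 h2 _
        exact hpar i k hik (hTp i hi k hk) q h1 h2)
      omega) Tᶜ c2
    have hU := hincU T Tᶜ c2
    rw [c1, hFT] at hL hU
    rw [← c3]
    exact arithA (by omega) hs hL hU
  by_cases hB : ∃ p, 6 ≤ (Finset.univ.filter (fun i => p ∈ Z i)).card
  · obtain ⟨p, hs⟩ := hB
    set T := Finset.univ.filter (fun i => p ∈ Z i) with hT
    have hTp : ∀ i ∈ T, p ∈ Z i := by
      intro i hi
      simpa only [hT, Finset.mem_filter, Finset.mem_univ, true_and] using hi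
    have hFT : ∀ U : Finset ι, U ⊆ T → U.Nonempty → F U = 2 * U.card := by
      intro U
      induction U using Finset.induction_on with
      | empty => simp
      | insert j U hj ih =>
        intro hU _
        rw [Finset.insert_subset_iff] at hU
        rw [Finset.card_insert_of_notMem hj, hF j U hj]
        rcases U.eq_empty_or_nonempty with rfl | hne
        · simp [hN, hF0]
        · have : N j U = {p} := by
            apply Set.eq_singleton_iff_unique_mem.2
            obtain ⟨i, hi⟩ := hne
            refine ⟨⟨hTp j hU.1, i, hi, hTp i (hU.2 hi)⟩, ?_⟩
            rintro q ⟨hq, i, hi, hqi⟩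
            exact H1 i j (fun h => hj (h ▸ hi)) q p hqi hq (hTp i (hU.2 hi)) (hTp j hU.1)
          rw [ih hU.2 hne, this, Set.ncard_singleton]; ring
    have hFT := hFT T subset_rfl (Finset.card_pos.1 (by omega))
    obtain ⟨c1, c2, c3⟩ := hcompl T
    have hL := hincL T T.card (by
      intro j S hTS hj
      have hjp : p ∉ Z j := by
        intro h; apply hj; apply hTS; simp [hT, h]
      have h1 := hlow j S (T.filter fun i => ¬ Par i j) hj
        ((Finset.filter_subset _ _).trans hTS) (by intro i hi; exact (Finset.mem_filter.1 hi).2) (by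
        intro i hi k hk hik q h1 h2 h3
        have := H1 i k hik p q (hTp i (Finset.mem_filter.1 hi).1) (hTp k (Finset.mem_filter.1 hk).1)
          h1 h2
        exact hjp (this ▸ h3))
      have h2 : (T.filter fun i => Par i j).card ≤ 1 := by
        rw [Finset.card_le_one]
        intro i hi k hk
        rw [Finset.mem_filter] at hi hk
        by_contra hik
        exact hpar i k hik (htrans _ _ _ hi.2 (hsymm _ _ hk.2)) p (hTp i hi.1) (hTp k hk.1)
      have h3 := Finset.card_filter_add_card_filter_not (s := T) (fun i => Par i j)
      omega) Tᶜ c2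
    have hU := hincU T Tᶜ c2
    rw [c1, hFT] at hL hU
    rw [← c3]
    exact arithB (by omega) hs hL hU
  · push Not at hA hB
    have hC : ∀ S : Finset ι, 8 + S.card * (S.card - 1) ≤ 8 * F S := by
      intro S
      induction S using Finset.induction_on with
      | empty => simp [hF0]
      | insert j S hj ih =>
        have hfj := hfin j S hj
        have hsub : S ⊆ S.filter (fun i => Par i j) ∪
            hfj.toFinset.biUnion (fun q => S.filter (fun i => q ∈ Z i)) := by
          intro i hi
          by_cases h : Par i j
          · exact Finset.mem_union_left _ (Finset.mem_filter.2 ⟨hi, h⟩)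
          · obtain ⟨p, hp, hpj⟩ := hnpar i j h
            refine Finset.mem_union_right _ (Finset.mem_biUnion.2 ⟨p, ?_, Finset.mem_filter.2 ⟨hi, hp⟩⟩)
            rw [Set.Finite.mem_toFinset]
            exact ⟨hpj, i, hi, hp⟩
        have h1 : (S.filter (fun i => Par i j)).card ≤ 4 := by
          have a := hA j
          have b : insert j (S.filter (fun i => Par i j)) ⊆ Finset.univ.filter (fun i => Par i j) := by
            intro i hi
            rcases Finset.mem_insert.1 hi with rfl | hi
            · simp [hrefl]
            · simp [(Finset.mem_filter.1 hi).2]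
          have c := Finset.card_le_card b
          rw [Finset.card_insert_of_notMem (by simp [hj])] at c
          omega
        have h2 : (hfj.toFinset.biUnion (fun q => S.filter (fun i => q ∈ Z i))).card ≤
            hfj.toFinset.card * 4 := by
          apply Finset.card_biUnion_le_card_mul
          intro q hq
          rw [Set.Finite.mem_toFinset] at hq
          have a := hB q
          have b : insert j (S.filter (fun i => q ∈ Z i)) ⊆ Finset.univ.filter (fun i => q ∈ Z i) := by
            intro i hi
            rcases Finset.mem_insert.1 hi with rfl | hi
            · simp [hq.1]
            · simp [(Finset.mem_filter.1 hi).2]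
          have c := Finset.card_le_card b
          rw [Finset.card_insert_of_notMem (by simp [hj])] at c
          omega
        have h3 := (Finset.card_le_card hsub).trans (Finset.card_union_le _ _)
        rw [← Set.ncard_eq_toFinset_card _ hfj] at h2
        rw [hF j S hj, Finset.card_insert_of_notMem hj]
        exact arithC h1 h2 h3 ih
    have := hC Finset.univ
    rw [Finset.card_univ, hn] at this
    obtain ⟨u, rfl⟩ := Nat.exists_eq_add_of_le hn100
    have h2 : 8 + (100 + u) * 99 ≤ 8 * F Finset.univ := le_trans (by
      have : 99 ≤ 100 + u - 1 := by omega
      gcongr) this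
    omega

end Comb

section Plane

def gl (a b c : ℝ) : (ℝ × ℝ) →ᵃ[ℝ] ℝ where
  toFun p := a * p.1 + b * p.2 - c
  linear := a • LinearMap.fst ℝ ℝ ℝ + b • LinearMap.snd ℝ ℝ ℝ
  map_vadd' p v := by simp; ring

lemma gl_apply (a b c : ℝ) (p : ℝ × ℝ) : gl a b c p = a * p.1 + b * p.2 - c := rfl

lemma gl_linear (a b c : ℝ) (p : ℝ × ℝ) : (gl a b c).linear p = a * p.1 + b * p.2 := rfl

lemma sq_pos_of {a b : ℝ} (h : (a, b) ≠ (0, 0)) : 0 < a ^ 2 + b ^ 2 := by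
  by_contra hh
  apply h
  have ha : a = 0 := by nlinarith [sq_nonneg a, sq_nonneg b]
  have hb : b = 0 := by nlinarith [sq_nonneg a, sq_nonneg b]
  simp [ha, hb]

lemma two_pts {a b c a' b' c' : ℝ} (h : (a, b) ≠ (0, 0)) {p q r : ℝ × ℝ} (hpq : p ≠ q)
    (hp : gl a b c p = 0) (hq : gl a b c q = 0) (hr : gl a b c r = 0)
    (hp' : gl a' b' c' p = 0) (hq' : gl a' b' c' q = 0) : gl a' b' c' r = 0 := by
  obtain ⟨p1, p2⟩ := p
  obtain ⟨q1, q2⟩ := q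
  obtain ⟨r1, r2⟩ := r
  simp only [gl_apply] at *
  have hs := sq_pos_of h
  have hd : (r1 - p1) * (q2 - p2) - (r2 - p2) * (q1 - p1) = 0 := by
    have e1 : a * ((r1 - p1) * (q2 - p2) - (r2 - p2) * (q1 - p1)) = 0 := by
      linear_combination (q2 - p2) * (hr - hp) - (r2 - p2) * (hq - hp)
    have e2 : b * ((r1 - p1) * (q2 - p2) - (r2 - p2) * (q1 - p1)) = 0 := by
      linear_combination (r1 - p1) * (hq - hp) - (q1 - p1) * (hr - hp)
    have e3 : (a ^ 2 + b ^ 2) * ((r1 - p1) * (q2 - p2) - (r2 - p2) * (q1 - p1)) = 0 := by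
      linear_combination a * e1 + b * e2
    exact (mul_eq_zero.1 e3).resolve_left hs.ne'
  have hne : (q1 - p1, q2 - p2) ≠ (0, 0) := by
    intro h
    rw [Prod.mk.injEq] at h
    exact hpq (Prod.ext (by simp; linarith) (by simp; linarith))
  have f1 : (q1 - p1) * (a' * r1 + b' * r2 - c') = 0 := by
    linear_combination (r1 - p1) * (hq' - hp') - b' * hd + (q1 - p1) * hp'
  have f2 : (q2 - p2) * (a' * r1 + b' * r2 - c') = 0 := by
    linear_combination (r2 - p2) * (hq' - hp') + a' * hd + (q2 - p2) * hp'
  have f3 : ((q1 - p1) ^ 2 + (q2 - p2) ^ 2) * (a' * r1 + b' * r2 - c') = 0 := by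
    linear_combination (q1 - p1) * f1 + (q2 - p2) * f2
  exact (mul_eq_zero.1 f3).resolve_left (sq_pos_of hne).ne'

variable {ι : Type} [Fintype ι] [DecidableEq ι]

lemma plane_insert (A B C : ι → ℝ) (hne : ∀ i, (A i, B i) ≠ (0, 0))
    (H1 : ∀ i j, i ≠ j → ∀ p q, gl (A i) (B i) (C i) p = 0 → gl (A j) (B j) (C j) p = 0 →
      gl (A i) (B i) (C i) q = 0 → gl (A j) (B j) (C j) q = 0 → p = q)
    (j : ι) (S : Finset ι) (hj : j ∉ S) :
    cnt (fun i => gl (A i) (B i) (C i)) (insert j S) = cnt (fun i => gl (A i) (B i) (C i)) S +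
      {p | p ∈ {p | gl (A j) (B j) (C j) p = 0} ∧
        ∃ i ∈ S, p ∈ {p | gl (A i) (B i) (C i) p = 0}}.ncard + 1 := by
  set g := fun i => gl (A i) (B i) (C i) with hg
  have hs := sq_pos_of (hne j)
  set D := A j ^ 2 + B j ^ 2 with hD
  set p0 : ℝ × ℝ := (A j * C j / D, B j * C j / D) with hp0
  set w : ℝ × ℝ := (- B j, A j) with hw
  set φ : ℝ →ᵃ[ℝ] ℝ × ℝ := AffineMap.lineMap p0 (p0 + w) with hφ
  have hφt : ∀ t, φ t = (A j * C j / D - t * B j, B j * C j / D + t * A j) := by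
    intro t
    rw [hφ, AffineMap.lineMap_apply]
    ext <;> simp [hw, hp0] <;> ring
  have hφ0 : ∀ t, g j (φ t) = 0 := by
    intro t
    simp only [hg, gl_apply, hφt]
    field_simp
    rw [hD]; ring
  have hφs : ∀ p, g j p = 0 → ∃ t, φ t = p := by
    intro p hp
    simp only [hg, gl_apply] at hp
    refine ⟨(A j * p.2 - B j * p.1) / D, ?_⟩
    rw [hφt]
    ext
    · simp only; field_simp; rw [hD]; linear_combination (-A j) * hp
    · simp only; field_simp; rw [hD]; linear_combination (-B j) * hp
  have hφi : Function.Injective φ := by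
    intro s t hst
    rw [hφt, hφt, Prod.mk.injEq] at hst
    have : D * (s - t) = 0 := by
      rw [hD]; linear_combination A j * hst.2 - B j * hst.1
    linarith [(mul_eq_zero.1 this).resolve_left hs.ne']
  rw [cnt_insert g S j hj (A j, B j) (by simp only [hg, gl_linear]; nlinarith), add_assoc]
  congr 1
  have h1 := cnt_one (fun i => (g i).comp φ) S (by
    intro i hi
    by_contra hh
    push Not at hh
    have := H1 i j (fun h => hj (h ▸ hi)) (φ 0) (φ 1) (hh 0) (hφ0 0) (hh 1) (hφ0 1)
    exact zero_ne_one (hφi this))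
  have e1 : sg g S '' {p | p ∈ rg g S ∧ g j p = 0} =
      sg (fun i => (g i).comp φ) S '' rg (fun i => (g i).comp φ) S := by
    apply Set.Subset.antisymm
    · rintro _ ⟨p, ⟨hp, h0⟩, rfl⟩
      obtain ⟨t, rfl⟩ := hφs p h0
      exact ⟨t, hp, rfl⟩
    · rintro _ ⟨t, ht, rfl⟩
      exact ⟨φ t, ⟨ht, hφ0 t⟩, rfl⟩
  rw [e1]
  have e2 : {p | p ∈ {p | gl (A j) (B j) (C j) p = 0} ∧
        ∃ i ∈ S, p ∈ {p | gl (A i) (B i) (C i) p = 0}} =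
      φ '' {t | ∃ i ∈ S, ((g i).comp φ) t = 0} := by
    apply Set.Subset.antisymm
    · rintro p ⟨h0, i, hi, hp⟩
      obtain ⟨t, rfl⟩ := hφs p h0
      exact ⟨t, ⟨i, hi, hp⟩, rfl⟩
    · rintro _ ⟨t, ⟨i, hi, ht⟩, rfl⟩
      exact ⟨hφ0 t, i, hi, ht⟩
  rw [e2, Set.ncard_image_of_injective _ hφi]
  exact h1

lemma region_eq (A B C : ι → ℝ) :
    regionCount (⋃ i, {p : ℝ × ℝ | A i * p.1 + B i * p.2 = C i}) =
      cnt (fun i => gl (A i) (B i) (C i)) Finset.univ := by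
  set g := fun i => gl (A i) (B i) (C i) with hg
  set Y : Set (ℝ × ℝ) := (⋃ i, {p : ℝ × ℝ | A i * p.1 + B i * p.2 = C i})ᶜ with hY
  have hYr : Y = rg g Finset.univ := by
    ext p
    simp [hY, rg, hg, gl_apply, sub_eq_zero]
  have hmY : ∀ p, p ∈ Y ↔ p ∈ rg g Finset.univ := fun p => by rw [hYr]
  have hcont : ∀ i, Continuous (fun p : ℝ × ℝ => g i p) := by
    intro i; simp only [hg, gl_apply]; fun_prop
  have hne : ∀ (x : Y) i, g i x ≠ 0 := by
    intro x i
    exact (hmY _).1 x.2 i (Finset.mem_univ i)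
  have hlc : IsLocallyConstant (fun x : Y => sg g Finset.univ (x : ℝ × ℝ)) := by
    rw [IsLocallyConstant.iff_eventually_eq]
    intro x
    have : ∀ᶠ y : Y in nhds x, ∀ i, (0 < g i y ↔ 0 < g i x) := by
      rw [Filter.eventually_all]
      intro i
      have hc : Continuous fun y : Y => g i y := (hcont i).comp continuous_subtype_val
      rcases lt_or_gt_of_ne (hne x i) with h | h
      · filter_upwards [hc.continuousAt.eventually_lt_const h] with y hy
        constructor <;> intro <;> linarith
      · filter_upwards [hc.continuousAt.eventually_const_lt h] with y hy
        constructor <;> intro <;> linarith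
    filter_upwards [this] with y hy
    exact sg_eq_iff.2 fun i _ => hy i
  have hiff : ∀ x y : Y, (x : ConnectedComponents Y) = y ↔
      sg g Finset.univ (x : ℝ × ℝ) = sg g Finset.univ (y : ℝ × ℝ) := by
    intro x y
    rw [ConnectedComponents.coe_eq_coe]
    constructor
    · intro h
      exact hlc.apply_eq_of_isPreconnected isPreconnected_connectedComponent
        mem_connectedComponent (h ▸ mem_connectedComponent)
    · intro h
      have hx : (x : ℝ × ℝ) ∈ rg g Finset.univ := (hmY _).1 x.2
      have hy : (y : ℝ × ℝ) ∈ rg g Finset.univ := (hmY _).1 y.2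
      let γ : unitInterval → Y := fun t => ⟨(x : ℝ × ℝ) + (t : ℝ) • ((y : ℝ × ℝ) - x), by
        rw [hmY]; exact (seg_same hx hy h t.2.1 t.2.2).1⟩
      have hγ : Continuous γ := by
        apply Continuous.subtype_mk
        fun_prop
      have hpre : IsPreconnected (Set.range γ) := isPreconnected_range hγ
      have hx' : x ∈ Set.range γ := ⟨0, by ext <;> simp [γ]⟩
      have hy' : y ∈ Set.range γ := ⟨1, by ext <;> simp [γ]⟩
      exact (connectedComponent_eq (hpre.subset_connectedComponent hx' hy'))
  unfold regionCount cnt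
  rw [← Nat.card_coe_set_eq]
  refine Nat.card_congr (Equiv.ofBijective (Quotient.lift
    (fun x : Y => (⟨sg g Finset.univ (x : ℝ × ℝ), x, (hmY _).1 x.2, rfl⟩ :
      ↥(sg g Finset.univ '' rg g Finset.univ))) ?_) ⟨?_, ?_⟩)
  · intro x y h
    exact Subtype.ext ((hiff x y).1 (Quotient.sound h))
  · intro x y
    induction x using Quotient.inductionOn with | _ x
    induction y using Quotient.inductionOn with | _ y
    intro h
    exact (hiff x y).2 (congrArg Subtype.val h)
  · rintro ⟨_, p, hp, rfl⟩
    exact ⟨Quotient.mk _ ⟨p, (hmY p).2 hp⟩, rfl⟩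

end Plane

/-- For all sufficiently large `n`, neither `3n - 4` nor `4n - 4` is a region
count of an arrangement of `n` distinct lines. -/
theorem stmt19 : ∃ N : ℕ, ∀ n ≥ N, 3 * n - 4 ∉ Lset n ∧ 4 * n - 4 ∉ Lset n := by
  refine ⟨100, fun n hn => ?_⟩
  have key : ∀ ℓ : Fin n → Set (ℝ × ℝ), (∀ i, IsLine (ℓ i)) → Function.Injective ℓ →
      regionCount (⋃ i, ℓ i) ≠ 3 * n - 4 ∧ regionCount (⋃ i, ℓ i) ≠ 4 * n - 4 := by
    intro ℓ hl hinj
    choose A B C hne hℓ using hl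
    have hmem : ∀ i p, p ∈ ℓ i ↔ gl (A i) (B i) (C i) p = 0 := by
      intro i p; rw [hℓ i, gl_apply, sub_eq_zero]; rfl
    have H1 : ∀ i j, i ≠ j → ∀ p q, gl (A i) (B i) (C i) p = 0 → gl (A j) (B j) (C j) p = 0 →
        gl (A i) (B i) (C i) q = 0 → gl (A j) (B j) (C j) q = 0 → p = q := by
      intro i j hij p q h1 h2 h3 h4
      by_contra hpq
      apply hij
      apply hinj
      ext r
      rw [hmem, hmem]
      exact ⟨fun h => two_pts (hne i) hpq h1 h3 h h2 h4, fun h => two_pts (hne j) hpq h2 h4 h h1 h3⟩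
    have hU : (⋃ i, ℓ i) = ⋃ i, {p : ℝ × ℝ | A i * p.1 + B i * p.2 = C i} := by
      congr 1; ext1 i; exact hℓ i
    rw [hU, region_eq]
    refine comb (fun i => {p | gl (A i) (B i) (C i) p = 0})
      (fun i j => A i * B j - A j * B i = 0) _ (cnt_empty _) ?_ H1 ?_ ?_ ?_ ?_ ?_ n (by simp) hn
    · intro j S hj
      convert plane_insert A B C hne H1 j S hj
    · intro i; ring
    · intro i j h; linarith
    · intro i j k h1 h2
      have hs := sq_pos_of (hne j)
      have : (A j ^ 2 + B j ^ 2) * (A i * B k - A k * B i) = 0 := by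
        linear_combination (A j * A k + B j * B k) * h1 + (A j * A i + B j * B i) * h2
      exact (mul_eq_zero.1 this).resolve_left hs.ne'
    · intro i j hij h p hp hq
      have hp : gl (A i) (B i) (C i) p = 0 := hp
      have hq : gl (A j) (B j) (C j) p = 0 := hq
      have := H1 i j hij p (p.1 - B i, p.2 + A i) hp hq
        (by rw [gl_apply] at *; linear_combination hp)
        (by rw [gl_apply] at *; simp only; linear_combination hq + h)
      have h1 := congrArg Prod.fst this
      have h2 := congrArg Prod.snd this
      simp only at h1 h2
      apply hne i
      ext <;> simp <;> linarith
    · intro i j h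
      have h : A i * B j - A j * B i ≠ 0 := h
      refine ⟨((C i * B j - C j * B i) / (A i * B j - A j * B i),
        (A i * C j - A j * C i) / (A i * B j - A j * B i)), ?_, ?_⟩
      · change gl _ _ _ _ = 0
        rw [gl_apply]; simp only [div_eq_mul_inv]; linear_combination (C i) * mul_inv_cancel₀ h
      · change gl _ _ _ _ = 0
        rw [gl_apply]; simp only [div_eq_mul_inv]; linear_combination (C j) * mul_inv_cancel₀ h
  constructor
  · rintro ⟨ℓ, h1, h2, h3⟩
    exact (key ℓ h1 h2).1 h3.symm
  · rintro ⟨ℓ, h1, h2, h3⟩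
    exact (key ℓ h1 h2).2 h3.symm
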